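/- arXiv:2004.09333 — 2 statements merged into one kernel-verified Lean document; each statement's English description precedes it below -/
import Mathlib

section
/- Let (E, 𝓕, μ) be a probability space, (𝒳_i)_{i≥0} measurable spaces, X_i : E → 𝒳_i measurable, 𝒴_n = ∏_{j≥n} 𝒳_j and X̄_n(x) = (X_n(x), X_{n+1}(x), ...). Let (δ_n) be nonnegative reals with δ_n → 0. Let p, q ∈ (1,∞) with 1/p + 1/q = 1, let g_j : 𝒴_j → ℝ^d be measurable with g_j∘X̄_j ∈ L^q(μ; ℝ^d) for all j, and S_n = Σ_{j=0}^{n-1} g_j∘X̄_j. Let r : E → [0,∞) be measurable with ∫ r dμ = 1, and suppose that for every ε > 0 there exist a nonnegative s ∈ L^p(μ) with ∫ s dμ = 1, ‖r − s‖_{L^p(μ)} < ε, and a constant K_s ≥ 0 such that s satisfies the decorrelation property with constant K_s relative to (δ_n). Let ν be the probability measure dν = r dμ and (b_n) positive reals with b_n → ∞. Then the laws of S_n/b_n under μ converge weakly to some probability measure on ℝ^d if and only if the laws of S_n/b_n under ν converge weakly, and in that case the limits coincide. -/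
open MeasureTheory Filter Topology Complex
open scoped BigOperators ENNReal RealInnerProductSpace

/-- `X̄ₙ(x) = (Xₙ(x), Xₙ₊₁(x), ...)`. -/
def Xbar {E : Type*} {𝒳 : ℕ → Type*} (X : ∀ i, E → 𝒳 i) (n : ℕ) (x : E) :
    ∀ j, 𝒳 (n + j) := fun j => X (n + j) x

/-- The decorrelation property with constant `K` relative to the rates `δ`: for every `n`
and every bounded measurable `f : 𝒴ₙ → ℂ`,
`|∫ s·(f∘X̄ₙ) dμ − ∫ s dμ · ∫ f∘X̄ₙ dμ| ≤ K · sup|f| · δₙ`. -/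
def Decorrelates {E : Type*} [MeasurableSpace E] (μ : Measure E) {𝒳 : ℕ → Type*}
    [∀ i, MeasurableSpace (𝒳 i)] (X : ∀ i, E → 𝒳 i) (s : E → ℝ) (K : ℝ) (δ : ℕ → ℝ) : Prop :=
  ∀ (n : ℕ) (f : (∀ j, 𝒳 (n + j)) → ℂ) (C : ℝ), Measurable f → (∀ y, ‖f y‖ ≤ C) →
    ‖(∫ x, (s x : ℂ) * f (Xbar X n x) ∂μ) -
        ((∫ x, s x ∂μ : ℝ) : ℂ) * ∫ x, f (Xbar X n x) ∂μ‖ ≤ K * C * δ n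

/-- Convergence in distribution (weak convergence of laws) of `Wₙ` under `μ` towards `P`. -/
def TendstoInDistribution {E G : Type*} [MeasurableSpace E] [TopologicalSpace G] [MeasurableSpace G]
    (μ : Measure E) (W : ℕ → E → G) (P : Measure G) : Prop :=
  ∀ h : BoundedContinuousFunction G ℝ,
    Tendsto (fun n => ∫ x, h (W n x) ∂μ) atTop (𝓝 (∫ y, h y ∂P))

/-!
Weak convergence is tested on bounded Lipschitz functions `h`, and
`∫ h(Sₙ/bₙ) dν - ∫ h(Sₙ/bₙ) dμ = ∫ (r - 1) h(Sₙ/bₙ) dμ`, so everything reduces to showing that this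
last integral tends to `0`. Since `bₙ → ∞`, discarding the first `m` summands of `Sₙ` changes
`Sₙ/bₙ` by a term tending to `0` pointwise, and what remains is a function of `X̄ₘ`. Against bounded
functions of `X̄ₘ` with `m` large, `s - 1` integrates to almost `0` when `s` decorrelates, and this
property of `s - 1` survives limits in `L¹(μ)`, hence in `Lᵖ(μ)`.
-/

section AsymptoticOrthogonality

variable {E ι : Type*} {mE : MeasurableSpace E} {μ : Measure E}

/-- `u` is asymptotically orthogonal to the σ-algebras `𝓣 m` when, uniformly over the functions with
a given bound, its integrals against `𝓣 m`-measurable functions are small for suitable `m`. The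
σ-algebras of interest decrease, so a single `m` is enough to control all later ones. -/
def AsymptoticallyOrthogonal (μ : Measure E) (𝓣 : ι → MeasurableSpace E) (u : E → ℝ) : Prop :=
  ∀ C ε : ℝ, 0 < ε → ∃ m, ∀ f : E → ℝ, Measurable[𝓣 m] f → (∀ x, |f x| ≤ C) →
    |∫ x, u x * f x ∂μ| < ε

variable {𝓣 : ι → MeasurableSpace E} {u : E → ℝ}

lemma abs_integral_mul_le_of_abs_le {f : E → ℝ} {C : ℝ} (hu : Integrable u μ)
    (hf : ∀ x, |f x| ≤ C) : |∫ x, u x * f x ∂μ| ≤ C * ∫ x, |u x| ∂μ := by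
  rw [← integral_const_mul, ← Real.norm_eq_abs]
  refine norm_integral_le_of_norm_le (hu.abs.const_mul C)
    (Eventually.of_forall fun x => ?_)
  rw [Real.norm_eq_abs, abs_mul, mul_comm]
  gcongr
  exact hf x

lemma asymptoticallyOrthogonal_of_forall_exists_integral_abs_sub_lt (h𝓣 : ∀ m, 𝓣 m ≤ mE)
    (hu : Integrable u μ)
    (happrox : ∀ ε : ℝ, 0 < ε → ∃ v : E → ℝ, Integrable v μ ∧ ∫ x, |u x - v x| ∂μ < ε ∧
      AsymptoticallyOrthogonal μ 𝓣 v) :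
    AsymptoticallyOrthogonal μ 𝓣 u := by
  intro C ε hε
  obtain ⟨v, hv, huv, hv𝓣⟩ := happrox (ε / (2 * (|C| + 1))) (by positivity)
  obtain ⟨m, hm⟩ := hv𝓣 C (ε / 2) (half_pos hε)
  refine ⟨m, fun f hf hfC => ?_⟩
  have hfm : AEStronglyMeasurable f μ := (hf.mono (h𝓣 m) le_rfl).aestronglyMeasurable
  have hfb : ∀ᵐ x ∂μ, ‖f x‖ ≤ C := Eventually.of_forall hfC
  have hf1 : ∀ x, |f x| ≤ |C| + 1 := fun x => by linarith [hfC x, le_abs_self C]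
  have hsplit : ∫ x, u x * f x ∂μ = ∫ x, (u x - v x) * f x ∂μ + ∫ x, v x * f x ∂μ := by
    simp_rw [sub_mul]
    rw [integral_sub (hu.mul_bdd hfm hfb) (hv.mul_bdd hfm hfb), sub_add_cancel]
  calc |∫ x, u x * f x ∂μ|
      ≤ |∫ x, (u x - v x) * f x ∂μ| + |∫ x, v x * f x ∂μ| := hsplit ▸ abs_add_le _ _
    _ < (|C| + 1) * (ε / (2 * (|C| + 1))) + ε / 2 :=
        add_lt_add ((abs_integral_mul_le_of_abs_le (hu.sub' hv) hf1).trans_lt (by gcongr))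
          (hm f hf hfC)
    _ = ε := by field_simp; ring

lemma integral_abs_lt_of_eLpNorm_lt_ofReal [IsProbabilityMeasure μ] {p : ℝ≥0∞} (hp : 1 ≤ p)
    (hu : AEStronglyMeasurable u μ) {ε : ℝ} (h : eLpNorm u p μ < ENNReal.ofReal ε) :
    ∫ x, |u x| ∂μ < ε := by
  simp_rw [← Real.norm_eq_abs]
  rw [integral_norm_eq_lintegral_enorm hu, ← eLpNorm_one_eq_lintegral_enorm]
  exact ENNReal.toReal_lt_of_lt_ofReal ((eLpNorm_le_eLpNorm_of_exponent_le hp hu).trans_lt h)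

section PseudoMetricSpace

variable {G : Type*} [PseudoMetricSpace G] [MeasurableSpace G] [OpensMeasurableSpace G]
  {h : BoundedContinuousFunction G ℝ}

lemma integrable_mul_boundedContinuousFunction_comp {W : E → G} (hu : Integrable u μ)
    (hW : AEMeasurable W μ) : Integrable (fun x => u x * h (W x)) μ :=
  hu.mul_bdd (h.continuous.measurable.comp_aemeasurable hW).aestronglyMeasurable
    (Eventually.of_forall fun x => h.norm_coe_le_norm (W x))

lemma tendsto_integral_mul_comp_sub_of_tendsto_dist {W V : ℕ → E → G} (hu : Integrable u μ)
    (hh : UniformContinuous h) (hW : ∀ n, AEMeasurable (W n) μ) (hV : ∀ n, AEMeasurable (V n) μ)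
    (hWV : ∀ᵐ x ∂μ, Tendsto (fun n => dist (W n x) (V n x)) atTop (𝓝 0)) :
    Tendsto (fun n => ∫ x, u x * h (W n x) ∂μ - ∫ x, u x * h (V n x) ∂μ) atTop (𝓝 0) := by
  have hWi := fun n => integrable_mul_boundedContinuousFunction_comp (h := h) hu (hW n)
  have hVi := fun n => integrable_mul_boundedContinuousFunction_comp (h := h) hu (hV n)
  simp_rw [← integral_sub (hWi _) (hVi _), ← mul_sub]
  rw [← integral_zero E ℝ]
  refine tendsto_integral_of_dominated_convergence (fun x => |u x| * (2 * ‖h‖)) (fun n => ?_)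
    (hu.abs.mul_const _) (fun n => Eventually.of_forall fun x => ?_) ?_
  · simpa only [mul_sub] using ((hWi n).sub' (hVi n)).aestronglyMeasurable
  · rw [norm_mul, Real.norm_eq_abs, ← dist_eq_norm]
    gcongr
    exact h.dist_le_two_norm _ _
  · filter_upwards [hWV] with x hx
    have hpair : Tendsto (fun n => (W n x, V n x)) atTop (uniformity G) :=
      tendsto_uniformity_iff_dist_tendsto_zero.2 hx
    have hdist : Tendsto (fun n => dist (h (W n x)) (h (V n x))) atTop (𝓝 0) :=
      tendsto_uniformity_iff_dist_tendsto_zero.1 (Tendsto.comp hh hpair)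
    have hsub : Tendsto (fun n => h (W n x) - h (V n x)) atTop (𝓝 0) :=
      tendsto_zero_iff_norm_tendsto_zero.2 (by simpa only [dist_eq_norm] using hdist)
    simpa only [mul_zero] using hsub.const_mul (u x)

lemma AsymptoticallyOrthogonal.tendsto_integral_mul_comp (hu𝓣 : AsymptoticallyOrthogonal μ 𝓣 u)
    (h𝓣 : ∀ m, 𝓣 m ≤ mE) (hu : Integrable u μ) (hh : UniformContinuous h) {W : ℕ → E → G}
    (hW : ∀ n, AEMeasurable (W n) μ)
    (hWV : ∀ m, ∃ V : ℕ → E → G, (∀ n, Measurable[𝓣 m] (V n)) ∧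
      ∀ᵐ x ∂μ, Tendsto (fun n => dist (W n x) (V n x)) atTop (𝓝 0)) :
    Tendsto (fun n => ∫ x, u x * h (W n x) ∂μ) atTop (𝓝 0) := by
  rw [Metric.tendsto_nhds]
  intro ε hε
  obtain ⟨m, hm⟩ := hu𝓣 ‖h‖ (ε / 2) (half_pos hε)
  obtain ⟨V, hV, hdist⟩ := hWV m
  have hVsmall : ∀ n, |∫ x, u x * h (V n x) ∂μ| < ε / 2 := fun n =>
    hm _ (h.continuous.measurable.comp (hV n)) fun x => h.norm_coe_le_norm (V n x)
  have hlim := tendsto_integral_mul_comp_sub_of_tendsto_dist hu hh hW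
    (fun n => ((hV n).mono (h𝓣 m) le_rfl).aemeasurable) hdist
  filter_upwards [Metric.tendsto_nhds.1 hlim (ε / 2) (half_pos hε)] with n hn
  rw [Real.dist_0_eq_abs] at hn ⊢
  linarith [hVsmall n, abs_sub_abs_le_abs_sub (∫ x, u x * h (W n x) ∂μ)
    (∫ x, u x * h (V n x) ∂μ)]

end PseudoMetricSpace

lemma AsymptoticallyOrthogonal.tendsto_integral_mul_comp_smul_sum {𝓣 : ℕ → MeasurableSpace E}
    (hu𝓣 : AsymptoticallyOrthogonal μ 𝓣 u) (h𝓣 : ∀ m, 𝓣 m ≤ mE) (h𝓣anti : Antitone 𝓣)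
    (hu : Integrable u μ) {G : Type*} [NormedAddCommGroup G] [NormedSpace ℝ G]
    [MeasurableSpace G] [BorelSpace G] [SecondCountableTopology G]
    {h : BoundedContinuousFunction G ℝ} (hh : UniformContinuous h) {Z : ℕ → E → G}
    (hZ : ∀ j, Measurable[𝓣 j] (Z j)) {a : ℕ → ℝ} (ha : Tendsto a atTop (𝓝 0)) :
    Tendsto (fun n => ∫ x, u x * h (a n • ∑ j ∈ Finset.range n, Z j x) ∂μ) atTop (𝓝 0) := by
  refine hu𝓣.tendsto_integral_mul_comp h𝓣 hu hh (fun n => ?_) fun m =>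
    ⟨fun n x => a n • ∑ j ∈ Finset.Ico m n, Z j x, fun n => ?_, Eventually.of_forall fun x => ?_⟩
  · exact ((Finset.measurable_sum _ fun j _ =>
      (hZ j).mono (h𝓣 j) le_rfl).const_smul (a n)).aemeasurable
  · exact (Finset.measurable_sum _ fun j hj =>
      (hZ j).mono (h𝓣anti (Finset.mem_Ico.1 hj).1) le_rfl).const_smul (a n)
  · have hlim : Tendsto (fun n => ‖a n • ∑ j ∈ Finset.range m, Z j x‖) atTop (𝓝 0) := by
      simpa using (ha.smul_const (∑ j ∈ Finset.range m, Z j x)).norm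
    refine hlim.congr' ?_
    filter_upwards [eventually_ge_atTop m] with n hn
    rw [dist_eq_norm, ← smul_sub, ← Finset.sum_range_add_sum_Ico _ hn, add_sub_cancel_right]

end AsymptoticOrthogonality

section Decorrelation

variable {E : Type*} {𝒳 : ℕ → Type*} [∀ i, MeasurableSpace (𝒳 i)] {X : ∀ i, E → 𝒳 i}

/-- The σ-algebra `σ(Xₙ, Xₙ₊₁, ...)` of the events depending only on the coordinates of index at
least `n`, encoded as the σ-algebra generated by the single map `X̄ₙ`. -/
abbrev futureMeasurableSpace (X : ∀ i, E → 𝒳 i) (n : ℕ) : MeasurableSpace E :=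
  MeasurableSpace.comap (Xbar X n) inferInstance

lemma measurable_futureMeasurableSpace_of_le {m i : ℕ} (hmi : m ≤ i) :
    Measurable[futureMeasurableSpace X m] (X i) := by
  obtain ⟨k, rfl⟩ := Nat.exists_eq_add_of_le hmi
  exact (measurable_pi_apply k).comp (comap_measurable (Xbar X m))

lemma antitone_futureMeasurableSpace : Antitone (futureMeasurableSpace X) := fun m n hmn =>
  Measurable.comap_le <| @measurable_pi_lambda _ _ _ (futureMeasurableSpace X m) _ _ fun j =>
    measurable_futureMeasurableSpace_of_le (hmn.trans (Nat.le_add_right n j))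

lemma exists_measurable_bounded_comp_Xbar_eq {n : ℕ} {f : E → ℝ} {C : ℝ} (hC : 0 ≤ C)
    (hf : Measurable[futureMeasurableSpace X n] f) (hfC : ∀ x, |f x| ≤ C) :
    ∃ F : (∀ j, 𝒳 (n + j)) → ℝ, Measurable F ∧ (∀ y, |F y| ≤ C) ∧ ∀ x, F (Xbar X n x) = f x := by
  obtain ⟨F, hF, rfl⟩ := hf.exists_eq_measurable_comp
  -- Off the range of `X̄ₙ` the factor `F` is arbitrary, so it has to be truncated.
  refine ⟨fun y => max (-C) (min C (F y)), by fun_prop, fun y => ?_, fun x => ?_⟩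
  · exact abs_le.2 ⟨le_max_left _ _, max_le (by linarith) (min_le_left _ _)⟩
  · obtain ⟨hlower, hupper⟩ := abs_le.1 (hfC x)
    exact (congrArg _ (min_eq_right hupper)).trans (max_eq_right hlower)

variable [mE : MeasurableSpace E]

lemma futureMeasurableSpace_le (hX : ∀ i, Measurable (X i)) (n : ℕ) :
    futureMeasurableSpace X n ≤ mE :=
  Measurable.comap_le <| measurable_pi_lambda _ fun j => hX (n + j)

variable {μ : Measure E} {s : E → ℝ} {K : ℝ} {δ : ℕ → ℝ}

lemma Decorrelates.abs_integral_sub_le (hs : Decorrelates μ X s K δ) {n : ℕ}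
    {F : (∀ j, 𝒳 (n + j)) → ℝ} (hF : Measurable F) {C : ℝ} (hFC : ∀ y, |F y| ≤ C) :
    |∫ x, s x * F (Xbar X n x) ∂μ - (∫ x, s x ∂μ) * ∫ x, F (Xbar X n x) ∂μ| ≤ K * C * δ n := by
  have h := hs n (fun y => (F y : ℂ)) C (Complex.measurable_ofReal.comp hF)
    (fun y => (Complex.norm_real _).trans_le (hFC y))
  simpa only [← Complex.ofReal_mul, integral_complex_ofReal, ← Complex.ofReal_sub,
    Complex.norm_real, Real.norm_eq_abs] using h

lemma Decorrelates.asymptoticallyOrthogonal [IsProbabilityMeasure μ] (hX : ∀ i, Measurable (X i))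
    (hδ : Tendsto δ atTop (𝓝 0)) (hs : Decorrelates μ X s K δ) (hsi : Integrable s μ) :
    AsymptoticallyOrthogonal μ (futureMeasurableSpace X) (fun x => s x - ∫ y, s y ∂μ) := by
  intro C ε hε
  have hlim : Tendsto (fun m => K * C * δ m) atTop (𝓝 0) := by simpa using hδ.const_mul (K * C)
  obtain ⟨m, hm⟩ := (hlim.eventually_lt_const hε).exists
  refine ⟨m, fun f hf hfC => ?_⟩
  have hfm : AEStronglyMeasurable f μ :=
    (hf.mono (futureMeasurableSpace_le hX m) le_rfl).aestronglyMeasurable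
  have hfb : ∀ᵐ x ∂μ, ‖f x‖ ≤ C := Eventually.of_forall hfC
  obtain ⟨x₀⟩ := nonempty_of_isProbabilityMeasure μ
  obtain ⟨F, hF, hFC, hFf⟩ :=
    exists_measurable_bounded_comp_Xbar_eq ((abs_nonneg _).trans (hfC x₀)) hf hfC
  simp_rw [sub_mul]
  rw [integral_sub (hsi.mul_bdd hfm hfb) ((integrable_const _).mul_bdd hfm hfb),
    integral_const_mul]
  simpa only [hFf] using (hs.abs_integral_sub_le hF hFC).trans_lt hm

lemma asymptoticallyOrthogonal_sub_one_of_forall_exists_decorrelates [IsProbabilityMeasure μ]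
    (hX : ∀ i, Measurable (X i)) (hδ : Tendsto δ atTop (𝓝 0)) {p : ℝ≥0∞} (hp : 1 ≤ p)
    {r : E → ℝ} (hr : Integrable r μ)
    (happrox : ∀ ε : ℝ, 0 < ε → ∃ s : E → ℝ, MemLp s p μ ∧ ∫ x, s x ∂μ = 1 ∧
      eLpNorm (fun x => r x - s x) p μ < ENNReal.ofReal ε ∧ ∃ K, Decorrelates μ X s K δ) :
    AsymptoticallyOrthogonal μ (futureMeasurableSpace X) (fun x => r x - 1) := by
  refine asymptoticallyOrthogonal_of_forall_exists_integral_abs_sub_lt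
    (futureMeasurableSpace_le hX) (hr.sub (integrable_const 1)) fun ε hε => ?_
  obtain ⟨s, hsp, hs1, hrs, K, hdec⟩ := happrox ε hε
  have hs : Integrable s μ := hsp.integrable hp
  refine ⟨fun x => s x - 1, hs.sub (integrable_const 1), ?_,
    by simpa only [hs1] using hdec.asymptoticallyOrthogonal hX hδ hs⟩
  simpa only [sub_sub_sub_cancel_right] using
    integral_abs_lt_of_eLpNorm_lt_ofReal hp (hr.sub' hs).aestronglyMeasurable hrs

end Decorrelation

section ConvergenceInDistribution

variable {E E' G : Type*} [MeasurableSpace E] [MeasurableSpace E'] [MeasurableSpace G]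
  {μ : Measure E} {ν : Measure E'} {W : ℕ → E → G} {V : ℕ → E' → G} {P Q : Measure G}

lemma TendstoInDistribution.unique [TopologicalSpace G] [HasOuterApproxClosed G] [BorelSpace G]
    [IsFiniteMeasure P] [IsFiniteMeasure Q] (hP : TendstoInDistribution μ W P)
    (hQ : TendstoInDistribution μ W Q) : P = Q :=
  ext_of_forall_integral_eq_of_IsFiniteMeasure fun h => tendsto_nhds_unique (hP h) (hQ h)

variable [PseudoMetricSpace G] [OpensMeasurableSpace G] [IsProbabilityMeasure μ]
  [IsProbabilityMeasure ν] [IsProbabilityMeasure P]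

lemma tendstoInDistribution_of_forall_lipschitzWith (hW : ∀ n, AEMeasurable (W n) μ)
    (hlip : ∀ h : BoundedContinuousFunction G ℝ, (∃ L, LipschitzWith L h) →
      Tendsto (fun n => ∫ x, h (W n x) ∂μ) atTop (𝓝 (∫ y, h y ∂P))) :
    TendstoInDistribution μ W P := by
  let laws : ℕ → ProbabilityMeasure G := fun n =>
    ⟨μ.map (W n), Measure.isProbabilityMeasure_map (hW n)⟩
  have integral_laws {f : G → ℝ} (hf : Continuous f) (n : ℕ) :
      ∫ y, f y ∂(laws n : Measure G) = ∫ x, f (W n x) ∂μ :=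
    integral_map (hW n) hf.measurable.aestronglyMeasurable
  have hlaws : Tendsto laws atTop (𝓝 ⟨P, inferInstance⟩) := by
    refine tendsto_iff_forall_lipschitz_integral_tendsto.2 fun f hfb ⟨L, hL⟩ => ?_
    simp_rw [integral_laws hL.continuous]
    exact hlip ⟨⟨f, hL.continuous⟩, hfb⟩ ⟨L, hL⟩
  intro f
  simpa only [integral_laws f.continuous, ProbabilityMeasure.coe_mk] using
    ProbabilityMeasure.tendsto_iff_forall_integral_tendsto.1 hlaws f

lemma tendstoInDistribution_congr_of_tendsto_integral_sub (hW : ∀ n, AEMeasurable (W n) μ)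
    (hV : ∀ n, AEMeasurable (V n) ν)
    (hsub : ∀ h : BoundedContinuousFunction G ℝ, (∃ L, LipschitzWith L h) →
      Tendsto (fun n => ∫ x, h (V n x) ∂ν - ∫ x, h (W n x) ∂μ) atTop (𝓝 0)) :
    TendstoInDistribution μ W P ↔ TendstoInDistribution ν V P := by
  refine ⟨fun hμ => tendstoInDistribution_of_forall_lipschitzWith hV fun h hh => ?_,
    fun hν => tendstoInDistribution_of_forall_lipschitzWith hW fun h hh => ?_⟩
  · simpa using (hsub h hh).add (hμ h)
  · simpa using (hν h).sub (hsub h hh)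

end ConvergenceInDistribution

section WithDensity

variable {E : Type*} [MeasurableSpace E] {μ : Measure E} {r : E → ℝ}

lemma isProbabilityMeasure_withDensity_ofReal (hr0 : 0 ≤ᵐ[μ] r) (hr1 : ∫ x, r x ∂μ = 1) :
    IsProbabilityMeasure (μ.withDensity fun x => ENNReal.ofReal (r x)) where
  measure_univ := by
    rw [withDensity_apply _ MeasurableSet.univ, Measure.restrict_univ,
      ← ofReal_integral_eq_lintegral_ofReal (integrable_of_integral_eq_one hr1) hr0, hr1,
      ENNReal.ofReal_one]

lemma integral_withDensity_ofReal_sub_integral (hr : Integrable r μ) (hr0 : 0 ≤ᵐ[μ] r)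
    {f : E → ℝ} (hrf : Integrable (fun x => r x * f x) μ) (hf : Integrable f μ) :
    ∫ x, f x ∂(μ.withDensity fun x => ENNReal.ofReal (r x)) - ∫ x, f x ∂μ =
      ∫ x, (r x - 1) * f x ∂μ := by
  have hdensity : ∫ x, f x ∂(μ.withDensity fun x => ENNReal.ofReal (r x)) =
      ∫ x, r x * f x ∂μ := by
    rw [integral_withDensity_eq_integral_toReal_smul₀ hr.aemeasurable.ennreal_ofReal
      (Eventually.of_forall fun _ => ENNReal.ofReal_lt_top)]
    refine integral_congr_ae ?_
    filter_upwards [hr0] with x hx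
    rw [ENNReal.toReal_ofReal hx, smul_eq_mul]
  simp_rw [hdensity, sub_mul, one_mul]
  rw [integral_sub hrf hf]

end WithDensity

theorem eagleson_nonstationary_closure_general
    {E : Type*} [MeasurableSpace E] {μ : Measure E} [IsProbabilityMeasure μ]
    {𝒳 : ℕ → Type*} [∀ i, MeasurableSpace (𝒳 i)] {X : ∀ i, E → 𝒳 i} (hX : ∀ i, Measurable (X i))
    {δ : ℕ → ℝ} (hδ : Tendsto δ atTop (𝓝 0)) {p : ℝ≥0∞} (hp : 1 ≤ p)
    {G : Type*} [NormedAddCommGroup G] [NormedSpace ℝ G] [MeasurableSpace G] [BorelSpace G]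
    [SecondCountableTopology G] {g : ∀ j, (∀ i, 𝒳 (j + i)) → G} (hg : ∀ j, Measurable (g j))
    {r : E → ℝ} (hr0 : 0 ≤ᵐ[μ] r) (hr1 : ∫ x, r x ∂μ = 1)
    (happrox : ∀ ε : ℝ, 0 < ε → ∃ s : E → ℝ, MemLp s p μ ∧ ∫ x, s x ∂μ = 1 ∧
      eLpNorm (fun x => r x - s x) p μ < ENNReal.ofReal ε ∧ ∃ K, Decorrelates μ X s K δ)
    {a : ℕ → ℝ} (ha : Tendsto a atTop (𝓝 0)) (P : Measure G) [IsProbabilityMeasure P] :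
    TendstoInDistribution μ (fun n x => a n • ∑ j ∈ Finset.range n, g j (Xbar X j x)) P ↔
      TendstoInDistribution (μ.withDensity fun x => ENNReal.ofReal (r x))
        (fun n x => a n • ∑ j ∈ Finset.range n, g j (Xbar X j x)) P := by
  have hr : Integrable r μ := integrable_of_integral_eq_one hr1
  have hν := isProbabilityMeasure_withDensity_ofReal hr0 hr1
  have hgX : ∀ j, Measurable[futureMeasurableSpace X j] fun x => g j (Xbar X j x) := fun j =>
    (hg j).comp (comap_measurable _)
  have hW : ∀ n, Measurable fun x => a n • ∑ j ∈ Finset.range n, g j (Xbar X j x) := fun n =>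
    (Finset.measurable_sum _ fun j _ =>
      (hgX j).mono (futureMeasurableSpace_le hX j) le_rfl).const_smul (a n)
  refine tendstoInDistribution_congr_of_tendsto_integral_sub (fun n => (hW n).aemeasurable)
    (fun n => (hW n).aemeasurable) fun h ⟨L, hL⟩ => ?_
  have hlim := (asymptoticallyOrthogonal_sub_one_of_forall_exists_decorrelates hX hδ hp hr
    happrox).tendsto_integral_mul_comp_smul_sum (futureMeasurableSpace_le hX)
    antitone_futureMeasurableSpace (hr.sub (integrable_const 1)) hL.uniformContinuous hgX ha
  refine hlim.congr fun n => (integral_withDensity_ofReal_sub_integral hr hr0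
    (integrable_mul_boundedContinuousFunction_comp hr (hW n).aemeasurable) ?_).symm
  simpa only [one_mul] using integrable_mul_boundedContinuousFunction_comp (h := h)
    (integrable_const (1 : ℝ)) (hW n).aemeasurable

/-- **Non-stationary Eagleson theorem** (Theorem 2.2, case where `r` lies in the
`L^p(μ)`-closure of the decorrelating class): with conjugate exponents `p, q ∈ (1,∞)`,
`gⱼ∘X̄ⱼ ∈ L^q(μ)`, and `r` a probability density approximable in `L^p(μ)` by nonnegative
probability densities satisfying the decorrelation property, `Sₙ/bₙ` converges in
distribution under `μ` iff it does under `ν = r dμ`, with the same limit. -/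
theorem eagleson_nonstationary_closure
    {E : Type*} [MeasurableSpace E] (μ : Measure E) [IsProbabilityMeasure μ]
    {𝒳 : ℕ → Type*} [∀ i, MeasurableSpace (𝒳 i)]
    (X : ∀ i, E → 𝒳 i) (hX : ∀ i, Measurable (X i))
    (δ : ℕ → ℝ) (hδ0 : ∀ n, 0 ≤ δ n) (hδ : Tendsto δ atTop (𝓝 0))
    (p q : ℝ≥0∞) (hp : 1 < p) (hp' : p ≠ ∞) (hq : 1 < q) (hq' : q ≠ ∞)
    (hpq : 1 / p + 1 / q = 1)
    {d : ℕ} (g : ∀ j, (∀ i, 𝒳 (j + i)) → EuclideanSpace ℝ (Fin d))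
    (hg : ∀ j, Measurable (g j))
    (hgq : ∀ j, MemLp (fun x => g j (Xbar X j x)) q μ)
    (S : ℕ → E → EuclideanSpace ℝ (Fin d))
    (hS : ∀ n x, S n x = ∑ j ∈ Finset.range n, g j (Xbar X j x))
    (r : E → ℝ) (hrmeas : Measurable r) (hr0 : ∀ x, 0 ≤ r x) (hr1 : ∫ x, r x ∂μ = 1)
    (happrox : ∀ ε : ℝ, 0 < ε → ∃ s : E → ℝ, Measurable s ∧ (∀ x, 0 ≤ s x) ∧
      MemLp s p μ ∧ (∫ x, s x ∂μ) = 1 ∧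
      eLpNorm (fun x => r x - s x) p μ < ENNReal.ofReal ε ∧
      ∃ Ks : ℝ, 0 ≤ Ks ∧ Decorrelates μ X s Ks δ)
    (b : ℕ → ℝ) (hb0 : ∀ n, 0 < b n) (hb : Tendsto b atTop atTop)
    (ν : Measure E) (hν : ν = μ.withDensity (fun x => ENNReal.ofReal (r x))) :
    ((∃ P : Measure (EuclideanSpace ℝ (Fin d)), IsProbabilityMeasure P ∧
        TendstoInDistribution μ (fun n x => (b n)⁻¹ • S n x) P) ↔
      (∃ P : Measure (EuclideanSpace ℝ (Fin d)), IsProbabilityMeasure P ∧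
        TendstoInDistribution ν (fun n x => (b n)⁻¹ • S n x) P)) ∧
    (∀ P Q : Measure (EuclideanSpace ℝ (Fin d)),
      IsProbabilityMeasure P → IsProbabilityMeasure Q →
      TendstoInDistribution μ (fun n x => (b n)⁻¹ • S n x) P →
      TendstoInDistribution ν (fun n x => (b n)⁻¹ • S n x) Q → P = Q) := by
  obtain rfl : S = fun n x => ∑ j ∈ Finset.range n, g j (Xbar X j x) := funext₂ hS
  subst hν
  have hiff := eagleson_nonstationary_closure_general hX hδ hp.le hg (Eventually.of_forall hr0) hr1
    (fun ε hε => let ⟨s, _, _, hsp, hs1, hrs, K, _, hdec⟩ := happrox ε hε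
      ⟨s, hsp, hs1, hrs, K, hdec⟩) hb.inv_tendsto_atTop
  exact ⟨exists_congr fun P => and_congr_right fun _ => hiff P,
    fun P Q _ _ hμ hν => ((hiff P).1 hμ).unique hν⟩
end

section
/- Let (E, 𝓕, μ) be a probability space, (𝒳_i)_{i≥0} measurable spaces, X_i : E → 𝒳_i measurable, 𝒴_n = ∏_{j≥n} 𝒳_j and X̄_n(x) = (X_n(x), X_{n+1}(x), ...). Let (δ_n) be nonnegative reals with δ_n → 0 and let r : E → [0,∞) with ∫ r dμ = 1 satisfy the decorrelation property with constant K ≥ 0 relative to (δ_n). Let g_j : 𝒴_j → ℝ^d be measurable, S_n = Σ_{j=0}^{n-1} g_j∘X̄_j, with ∫|S_n| dμ < ∞ and ∫ r·|S_n| dμ < ∞ for every n, and let (b_n) be positive reals with b_n → ∞. Then for every t ∈ ℝ^d, lim_{n→∞} | ∫ r(x) e^{i⟨t, S_n(x)⟩/b_n} dμ(x) − ∫ e^{i⟨t, S_n(x)⟩/b_n} dμ(x) | = 0. -/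
open MeasureTheory Filter Topology Complex
open scoped BigOperators ENNReal RealInnerProductSpace

/-! Both `∫ r · u` and `(∫ r) · ∫ u` are integrals against `u`, so their difference is
`∫ (r - ∫ r) · u`; decorrelation makes it small when `u` is measurable for a late tail
`σ(Xₖ, Xₖ₊₁, ...)`. Now `u = e^{i⟨t, Sₙ⟩/bₙ}` is not tail measurable, but deleting the first `k`
summands of `Sₙ` makes it so, and changes `u` by a quantity that tends to `0` pointwise as `n → ∞`,
because `Sₖ / bₙ → 0`. Dominated convergence against the fixed integrable weight `r - ∫ r` then
bounds the limsup by `K δₖ`, for every `k`. -/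

section TailSigmaAlgebra

variable {E : Type*} {𝒳 : ℕ → Type*} [∀ i, MeasurableSpace (𝒳 i)]

/-- The tail `σ`-algebra `σ(Xₙ, Xₙ₊₁, ...)` on `E`. It is encoded as the pull-back along `Xbar X n`,
so that its measurable functions are the `f ∘ X̄ₙ` occurring in `Decorrelates`. -/
abbrev tailSigmaAlgebra (X : ∀ i, E → 𝒳 i) (n : ℕ) : MeasurableSpace E :=
  MeasurableSpace.comap (Xbar X n) inferInstance

theorem measurable_Xbar [MeasurableSpace E] {X : ∀ i, E → 𝒳 i} (hX : ∀ i, Measurable (X i))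
    (n : ℕ) : Measurable (Xbar X n) :=
  measurable_pi_lambda _ fun _ => hX _

theorem tailSigmaAlgebra_le [mE : MeasurableSpace E] {X : ∀ i, E → 𝒳 i}
    (hX : ∀ i, Measurable (X i)) (n : ℕ) : tailSigmaAlgebra X n ≤ mE :=
  (measurable_Xbar hX n).comap_le

theorem measurable_tailSigmaAlgebra_apply (X : ∀ i, E → 𝒳 i) {k j : ℕ} (hkj : k ≤ j) :
    Measurable[tailSigmaAlgebra X k] (X j) := by
  obtain ⟨i, rfl⟩ := Nat.exists_eq_add_of_le hkj
  exact (measurable_pi_apply i).comp (comap_measurable (Xbar X k))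

theorem measurable_tailSigmaAlgebra_Xbar (X : ∀ i, E → 𝒳 i) {k j : ℕ} (hkj : k ≤ j) :
    Measurable[tailSigmaAlgebra X k] (Xbar X j) :=
  @measurable_pi_lambda _ _ _ (tailSigmaAlgebra X k) _ _ fun _ =>
    measurable_tailSigmaAlgebra_apply X (Nat.le_add_right_of_le hkj)

theorem measurable_tailSigmaAlgebra_sum_Ico {G : Type*} [AddCommMonoid G] [MeasurableSpace G]
    [MeasurableAdd₂ G] (X : ∀ i, E → 𝒳 i) {g : ∀ j, (∀ i, 𝒳 (j + i)) → G}
    (hg : ∀ j, Measurable (g j)) (k n : ℕ) :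
    Measurable[tailSigmaAlgebra X k] fun x => ∑ j ∈ Finset.Ico k n, g j (Xbar X j x) :=
  Finset.measurable_sum _ fun j hj =>
    (hg j).comp (measurable_tailSigmaAlgebra_Xbar X (Finset.mem_Ico.1 hj).1)

end TailSigmaAlgebra

theorem tendsto_sub_of_uniformContinuous {ι G H : Type*} [SeminormedAddCommGroup G]
    [SeminormedAddCommGroup H] {φ : G → H} (hφ : UniformContinuous φ) {l : Filter ι} {p q : ι → G}
    (hpq : Tendsto (fun i => p i - q i) l (𝓝 0)) :
    Tendsto (fun i => φ (p i) - φ (q i)) l (𝓝 0) := by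
  rw [tendsto_zero_iff_norm_tendsto_zero] at hpq ⊢
  simp only [← dist_eq_norm] at hpq ⊢
  have hpair : Tendsto (fun i => (p i, q i)) l (uniformity G) :=
    tendsto_uniformity_iff_dist_tendsto_zero.2 hpq
  exact tendsto_uniformity_iff_dist_tendsto_zero.1 (Tendsto.comp hφ hpair)

theorem tendsto_zero_of_tendsto_sub_of_norm_le {ι κ H : Type*} [SeminormedAddCommGroup H]
    {l : Filter ι} {l' : Filter κ} [l'.NeBot] {p : ι → H} {q : κ → ι → H} {c : κ → ℝ}
    (hpq : ∀ k, Tendsto (fun i => p i - q k i) l (𝓝 0)) (hq : ∀ k i, ‖q k i‖ ≤ c k)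
    (hc : Tendsto c l' (𝓝 0)) : Tendsto p l (𝓝 0) := by
  refine NormedAddGroup.tendsto_nhds_zero.2 fun ε hε => ?_
  obtain ⟨k, hk⟩ := (hc.eventually_lt_const (half_pos hε)).exists
  filter_upwards [NormedAddGroup.tendsto_nhds_zero.1 (hpq k) _ (half_pos hε)] with i hi
  calc ‖p i‖ ≤ ‖p i - q k i‖ + ‖q k i‖ := norm_le_norm_sub_add _ _
    _ < ε / 2 + ε / 2 := add_lt_add hi ((hq k i).trans_lt hk)
    _ = ε := add_halves ε

section BoundedFactor

variable {E 𝕜 : Type*} [MeasurableSpace E] {μ : Measure E} [RCLike 𝕜] {C : ℝ}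

theorem tendsto_integral_mul_zero_of_bounded {w : E → 𝕜} (hw : Integrable w μ) {F : ℕ → E → 𝕜}
    (hF : ∀ n, AEStronglyMeasurable (F n) μ) (hC : ∀ n x, ‖F n x‖ ≤ C)
    (hlim : ∀ x, Tendsto (fun n => F n x) atTop (𝓝 0)) :
    Tendsto (fun n => ∫ x, w x * F n x ∂μ) atTop (𝓝 0) := by
  rw [← integral_zero E 𝕜 (μ := μ)]
  refine tendsto_integral_of_dominated_convergence (fun x => ‖w x‖ * C)
    (fun n => hw.aestronglyMeasurable.mul (hF n)) (hw.norm.mul_const C)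
    (fun n => .of_forall fun x => ?_) (.of_forall fun x => ?_)
  · exact norm_mul_le_of_le le_rfl (hC n x)
  · simpa only [mul_zero] using (hlim x).const_mul (w x)

theorem integral_sub_const_mul_of_bounded [IsFiniteMeasure μ] {w f : E → 𝕜} (hw : Integrable w μ)
    (c : 𝕜) (hf : AEStronglyMeasurable f μ) (hC : ∀ x, ‖f x‖ ≤ C) :
    ∫ x, (w x - c) * f x ∂μ = (∫ x, w x * f x ∂μ) - c * ∫ x, f x ∂μ := by
  have hfint : Integrable f μ := .of_bound hf C (.of_forall hC)
  simp only [sub_mul]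
  rw [integral_sub (hw.mul_bdd hf (.of_forall hC)) (hfint.const_mul c), integral_const_mul]

end BoundedFactor

namespace Decorrelates

variable {E : Type*} [MeasurableSpace E] {μ : Measure E} {𝒳 : ℕ → Type*}
  [∀ i, MeasurableSpace (𝒳 i)] {X : ∀ i, E → 𝒳 i} {r : E → ℝ} {K : ℝ} {δ : ℕ → ℝ}

theorem norm_integral_mul_sub_le (hdec : Decorrelates μ X r K δ) {n : ℕ} {u : E → ℂ}
    (hu : Measurable[tailSigmaAlgebra X n] u) {C : ℝ} (hC0 : 0 ≤ C) (hC : ∀ x, ‖u x‖ ≤ C) :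
    ‖(∫ x, (r x : ℂ) * u x ∂μ) - ((∫ x, r x ∂μ : ℝ) : ℂ) * ∫ x, u x ∂μ‖ ≤ K * C * δ n := by
  obtain ⟨f, hf, rfl⟩ := hu.exists_eq_measurable_comp
  -- `f` is known to be bounded by `C` only on the range of `X̄ₙ`, so it is truncated elsewhere.
  let B : Set (∀ j, 𝒳 (n + j)) := {y | ‖f y‖ ≤ C}
  have hB : MeasurableSet B := measurableSet_le hf.norm measurable_const
  have hBf : ∀ y, ‖B.indicator f y‖ ≤ C := fun y => by
    by_cases hy : y ∈ B
    · rwa [Set.indicator_of_mem hy]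
    · rwa [Set.indicator_of_notMem hy, norm_zero]
  have hfX : ∀ x, B.indicator f (Xbar X n x) = f (Xbar X n x) := fun x =>
    Set.indicator_of_mem (s := B) (hC x) f
  simpa only [hfX, Function.comp_apply] using hdec n (B.indicator f) C (hf.indicator hB) hBf

theorem tendsto_integral_mul_sub [IsFiniteMeasure μ] (hdec : Decorrelates μ X r K δ)
    (hX : ∀ i, Measurable (X i)) (hδ : Tendsto δ atTop (𝓝 0)) (hr : Integrable r μ)
    {u : ℕ → E → ℂ} {v : ℕ → ℕ → E → ℂ} {C : ℝ} (hC0 : 0 ≤ C)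
    (hu : ∀ n, AEStronglyMeasurable (u n) μ) (hv : ∀ k n, Measurable[tailSigmaAlgebra X k] (v k n))
    (huC : ∀ n x, ‖u n x‖ ≤ C) (hvC : ∀ k n x, ‖v k n x‖ ≤ C)
    (huv : ∀ k x, Tendsto (fun n => u n x - v k n x) atTop (𝓝 0)) :
    Tendsto (fun n => (∫ x, (r x : ℂ) * u n x ∂μ) - ((∫ x, r x ∂μ : ℝ) : ℂ) * ∫ x, u n x ∂μ)
      atTop (𝓝 0) := by
  let w : E → ℂ := fun x => (r x : ℂ) - ((∫ x, r x ∂μ : ℝ) : ℂ)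
  have hw : Integrable w μ := hr.ofReal.sub (integrable_const _)
  have hv' : ∀ k n, AEStronglyMeasurable (v k n) μ := fun k n =>
    ((hv k n).mono (tailSigmaAlgebra_le hX k) le_rfl).aestronglyMeasurable
  have integral_w_mul : ∀ f : E → ℂ, AEStronglyMeasurable f μ → (∀ x, ‖f x‖ ≤ C) →
      ∫ x, w x * f x ∂μ =
        (∫ x, (r x : ℂ) * f x ∂μ) - ((∫ x, r x ∂μ : ℝ) : ℂ) * ∫ x, f x ∂μ := fun _ hf hfC =>
    integral_sub_const_mul_of_bounded hr.ofReal _ hf hfC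
  have tail_bound : ∀ k n, ‖∫ x, w x * v k n x ∂μ‖ ≤ K * C * δ k := fun k n => by
    rw [integral_w_mul _ (hv' k n) (hvC k n)]
    exact hdec.norm_integral_mul_sub_le (hv k n) hC0 (hvC k n)
  have head_negligible : ∀ k,
      Tendsto (fun n => (∫ x, w x * u n x ∂μ) - ∫ x, w x * v k n x ∂μ) atTop (𝓝 0) := fun k => by
    refine (tendsto_integral_mul_zero_of_bounded hw (fun n => (hu n).sub (hv' k n))
      (fun n x => norm_sub_le_of_le (huC n x) (hvC k n x)) (huv k)).congr fun n => ?_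
    simp only [Pi.sub_apply, mul_sub]
    exact integral_sub (hw.mul_bdd (hu n) (.of_forall (huC n)))
      (hw.mul_bdd (hv' k n) (.of_forall (hvC k n)))
  have hKδ : Tendsto (fun k => K * C * δ k) atTop (𝓝 0) := by
    simpa only [mul_zero] using hδ.const_mul (K * C)
  exact (tendsto_zero_of_tendsto_sub_of_norm_le head_negligible tail_bound hKδ).congr fun n =>
    integral_w_mul _ (hu n) (huC n)

theorem tendsto_integral_mul_uniformContinuous_sub [IsFiniteMeasure μ]
    (hdec : Decorrelates μ X r K δ) (hX : ∀ i, Measurable (X i)) (hδ : Tendsto δ atTop (𝓝 0))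
    (hr : Integrable r μ) {G : Type*} [NormedAddCommGroup G] [NormedSpace ℝ G] [MeasurableSpace G]
    [BorelSpace G] [SecondCountableTopology G] {g : ∀ j, (∀ i, 𝒳 (j + i)) → G}
    (hg : ∀ j, Measurable (g j)) {a : ℕ → ℝ} (ha : Tendsto a atTop (𝓝 0)) {φ : G → ℂ}
    (hφ : UniformContinuous φ) {C : ℝ} (hC : ∀ y, ‖φ y‖ ≤ C) :
    Tendsto (fun n =>
        (∫ x, (r x : ℂ) * φ (a n • ∑ j ∈ Finset.range n, g j (Xbar X j x)) ∂μ) -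
          ((∫ x, r x ∂μ : ℝ) : ℂ) * ∫ x, φ (a n • ∑ j ∈ Finset.range n, g j (Xbar X j x)) ∂μ)
      atTop (𝓝 0) := by
  have tail_measurable : ∀ k n, Measurable[tailSigmaAlgebra X k]
      fun x => φ (a n • ∑ j ∈ Finset.Ico k n, g j (Xbar X j x)) := fun k n =>
    hφ.continuous.measurable.comp
      ((measurable_tailSigmaAlgebra_sum_Ico X hg k n).const_smul (a n))
  refine hdec.tendsto_integral_mul_sub hX hδ hr ((norm_nonneg _).trans (hC 0)) (fun n => ?_)
    tail_measurable (fun _ _ => hC _) (fun _ _ _ => hC _) fun k x =>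
      tendsto_sub_of_uniformContinuous hφ ?_
  · simp only [Finset.range_eq_Ico]
    exact ((tail_measurable 0 n).mono (tailSigmaAlgebra_le hX 0) le_rfl).aestronglyMeasurable
  · have head_tendsto :
        Tendsto (fun n => a n • ∑ j ∈ Finset.range k, g j (Xbar X j x)) atTop (𝓝 0) := by
      simpa only [zero_smul] using ha.smul_const (∑ j ∈ Finset.range k, g j (Xbar X j x))
    refine head_tendsto.congr' ?_
    filter_upwards [eventually_ge_atTop k] with n hn
    rw [← smul_sub, ← Finset.sum_range_add_sum_Ico _ hn, add_sub_cancel_right]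

end Decorrelates

theorem uniformContinuous_exp_ofReal_mul_I :
    UniformContinuous fun θ : ℝ => Complex.exp (θ * Complex.I) := by
  have h := (lipschitzWith_circleMap 0 1).uniformContinuous
  simpa only [funext (circleMap_zero 1), Complex.ofReal_one, one_mul] using h

theorem eagleson_charfun_estimate_general
    {E : Type*} [MeasurableSpace E] (μ : Measure E) [IsFiniteMeasure μ]
    {𝒳 : ℕ → Type*} [∀ i, MeasurableSpace (𝒳 i)]
    (X : ∀ i, E → 𝒳 i) (hX : ∀ i, Measurable (X i))
    (δ : ℕ → ℝ) (hδ : Tendsto δ atTop (𝓝 0))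
    (r : E → ℝ) (hr : Integrable r μ) (K : ℝ) (hdec : Decorrelates μ X r K δ)
    {V : Type*} [NormedAddCommGroup V] [InnerProductSpace ℝ V] [MeasurableSpace V]
    [OpensMeasurableSpace V] (g : ∀ j, (∀ i, 𝒳 (j + i)) → V) (hg : ∀ j, Measurable (g j))
    (S : ℕ → E → V) (hS : ∀ n x, S n x = ∑ j ∈ Finset.range n, g j (Xbar X j x))
    (b : ℕ → ℝ) (hb : Tendsto b atTop atTop) (t : V) :
    Tendsto (fun n =>
        (∫ x, (r x : ℂ) * Complex.exp ((⟪t, S n x⟫ / b n : ℝ) * Complex.I) ∂μ) -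
          ((∫ x, r x ∂μ : ℝ) : ℂ) * ∫ x, Complex.exp ((⟪t, S n x⟫ / b n : ℝ) * Complex.I) ∂μ)
      atTop (𝓝 0) := by
  have hinner : ∀ j, Measurable fun y => ⟪t, g j y⟫ := fun j =>
    (innerSL ℝ t).continuous.measurable.comp (hg j)
  have hphase : ∀ n x,
      ⟪t, S n x⟫ / b n = (b n)⁻¹ • ∑ j ∈ Finset.range n, ⟪t, g j (Xbar X j x)⟫ := fun n x => by
    rw [hS, inner_sum, smul_eq_mul, div_eq_inv_mul]
  simp only [hphase]
  exact hdec.tendsto_integral_mul_uniformContinuous_sub hX hδ hr hinner hb.inv_tendsto_atTop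
    uniformContinuous_exp_ofReal_mul_I fun θ => (Complex.norm_exp_ofReal_mul_I θ).le

/-- Key characteristic-function estimate in the proof of Theorem 2.2: under the
decorrelation assumption for the density `r`, for every `t ∈ ℝ^d`,
`|∫ r e^{i⟨t,Sₙ⟩/bₙ} dμ − ∫ e^{i⟨t,Sₙ⟩/bₙ} dμ| → 0` as `n → ∞`. -/
theorem eagleson_charfun_estimate
    {E : Type*} [MeasurableSpace E] (μ : Measure E) [IsProbabilityMeasure μ]
    {𝒳 : ℕ → Type*} [∀ i, MeasurableSpace (𝒳 i)]
    (X : ∀ i, E → 𝒳 i) (hX : ∀ i, Measurable (X i))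
    (δ : ℕ → ℝ) (hδ0 : ∀ n, 0 ≤ δ n) (hδ : Tendsto δ atTop (𝓝 0))
    (r : E → ℝ) (hrmeas : Measurable r) (hr0 : ∀ x, 0 ≤ r x) (hr1 : ∫ x, r x ∂μ = 1)
    (K : ℝ) (hK : 0 ≤ K) (hdec : Decorrelates μ X r K δ)
    {d : ℕ} (g : ∀ j, (∀ i, 𝒳 (j + i)) → EuclideanSpace ℝ (Fin d))
    (hg : ∀ j, Measurable (g j))
    (S : ℕ → E → EuclideanSpace ℝ (Fin d))
    (hS : ∀ n x, S n x = ∑ j ∈ Finset.range n, g j (Xbar X j x))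
    (hSint : ∀ n, Integrable (S n) μ)
    (hSrint : ∀ n, Integrable (fun x => r x * ‖S n x‖) μ)
    (b : ℕ → ℝ) (hb0 : ∀ n, 0 < b n) (hb : Tendsto b atTop atTop) :
    ∀ t : EuclideanSpace ℝ (Fin d),
      Tendsto (fun n =>
        ‖(∫ x, (r x : ℂ) * Complex.exp ((⟪t, S n x⟫ / b n : ℝ) * Complex.I) ∂μ) -
            ∫ x, Complex.exp ((⟪t, S n x⟫ / b n : ℝ) * Complex.I) ∂μ‖)
        atTop (𝓝 0) := by
  intro t
  have hr : Integrable r μ := .of_integral_ne_zero (hr1 ▸ one_ne_zero)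
  simpa only [hr1, Complex.ofReal_one, one_mul, norm_zero] using
    (eagleson_charfun_estimate_general μ X hX δ hδ r hr K hdec g hg S hS b hb t).norm
end
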